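/- Fix 0 < ε < 1/6, and for each n let λ^n be a partition of n whose number of parts satisfies n(λ^n) ≤ n^ε. Then for every continuous function f : ℝ → ℝ of polynomial growth, E_n[f(τ̄(σ)) | λ(σ) = λ^n] − E_n[f(τ̄(σ))] → 0 as n → ∞, where τ̄ is the normalized Kendall's tau and the conditional expectation is the average of f(τ̄) over the uniform measure on S_n^{λ^n}. -/

import Mathlib

open scoped BigOperators Classical
open Finset Filter

/-- Expectation under the uniform measure on `S_n`. -/
noncomputable def En {n : ℕ} (g : Equiv.Perm (Fin n) → ℝ) : ℝ :=
  (∑ σ : Equiv.Perm (Fin n), g σ) / (Fintype.card (Equiv.Perm (Fin n)) : ℝ)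

/-- Variance under the uniform measure on `S_n`. -/
noncomputable def VarN {n : ℕ} (g : Equiv.Perm (Fin n) → ℝ) : ℝ :=
  En (fun σ => (g σ - En g) ^ 2)

/-- Kendall's tau: the number of inversions `#{(i,j) : i < j, σ(i) > σ(j)}`. -/
noncomputable def kendallTau {n : ℕ} (σ : Equiv.Perm (Fin n)) : ℕ :=
  (Finset.univ.filter (fun p : Fin n × Fin n => p.1 < p.2 ∧ σ p.2 < σ p.1)).card

/-- Normalized Kendall's tau `τ̄ = (τ − E τ)/√(Var τ)`. -/
noncomputable def kendallTauBar {n : ℕ} (σ : Equiv.Perm (Fin n)) : ℝ :=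
  ((kendallTau σ : ℝ) - En (fun σ : Equiv.Perm (Fin n) => (kendallTau σ : ℝ))) /
    Real.sqrt (VarN (fun σ : Equiv.Perm (Fin n) => (kendallTau σ : ℝ)))

/-- Conditional expectation given cycle type `λ`: the average over `S_n^λ`. -/
noncomputable def EnCond {n : ℕ} (lam : (Fintype.card (Fin n)).Partition)
    (g : Equiv.Perm (Fin n) → ℝ) : ℝ :=
  (∑ σ ∈ Finset.univ.filter (fun σ : Equiv.Perm (Fin n) => σ.partition = lam), g σ) /
    ((Finset.univ.filter (fun σ : Equiv.Perm (Fin n) => σ.partition = lam)).card : ℝ)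

/-!
A permutation `σ` with `c(σ)` cycles becomes a full cycle after merging its cycles with `c(σ) - 1`
transpositions, and all full cycles are conjugate. Hence, given `s` of cycle type `λ`, every `σ`
lies within Hamming distance `2 (c(σ) + c(s))` of a conjugate of `s`. Taking `σ` uniform and
conjugating both permutations by an independent uniform one couples the uniform measure on `S_n`
with the uniform measure on `S_n^λ`.

Changing one value of a permutation moves `τ` by at most `2n`, while `τ` has standard deviation of
order `n ^ (3/2)`, so under the coupling `τ̄` moves by `O((c(σ) + n(λ)) / √n)`. Now `c(σ)` has all
moments of order at most `n`, because `E 2 ^ c(σ) = n + 1`, and `τ̄` has bounded moments, because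
`τ` is a sum of independent uniform variables and is therefore sub-Gaussian. A continuous `f` of
polynomial growth satisfies `|f a - f b| ≤ η (1 + |a| ^ p) + K |a - b| ^ p` with `η` arbitrarily
small, and the `p`-th moment of `(c(σ) + n(λ)) / √n` vanishes for `p ≥ 3` as soon as `n(λ) = o(√n)`.
-/

/-! ### Cycles and the Hamming distance -/

section NumCycles

open Equiv Equiv.Perm

variable {α β : Type*}

/-- The number of cycles of a permutation of a finite type, each fixed point counting as a cycle. -/
noncomputable def numCycles (σ : Perm α) : ℕ :=
  Nat.card (Quotient (SameCycle.setoid σ))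

lemma sameCycle_map_of_forall_sameCycle_apply {e : Perm α} {σ : Perm β} (φ : α → β)
    (hφ : ∀ i, σ.SameCycle (φ i) (φ (e i))) {i j : α} (hij : e.SameCycle i j) :
    σ.SameCycle (φ i) (φ j) := by
  obtain ⟨k, rfl⟩ := hij
  induction k using Int.induction_on with
  | zero => exact SameCycle.refl σ (φ i)
  | succ k ih =>
    rw [add_comm, zpow_one_add, Perm.mul_apply]
    exact ih.trans (hφ _)
  | pred k ih =>
    have hstep := hφ ((e ^ (-(k : ℤ) - 1)) i)
    rw [← Perm.mul_apply, ← zpow_one_add, add_sub_cancel] at hstep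
    exact ih.trans hstep.symm

lemma sameCycle_mul_swap [Finite α] [DecidableEq α] {σ : Perm α} {x y : α}
    (hxy : ¬ σ.SameCycle x y) : (σ * swap x y).SameCycle x y := by
  have hreach (k : ℕ) : (σ * swap x y).SameCycle x ((σ ^ (k + 1)) y) := by
    induction k with
    | zero => exact ⟨1, by simp⟩
    | succ k ih =>
      rw [pow_succ' σ (k + 1), Perm.mul_apply]
      by_cases hy : (σ ^ (k + 1)) y = y
      · exact ⟨1, by simp [hy]⟩
      · have hx : (σ ^ (k + 1)) y ≠ x := fun h =>
          hxy (SameCycle.symm ⟨(k + 1 : ℕ), by rw [zpow_natCast, h]⟩)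
        exact ih.trans ⟨1, by simp [swap_apply_of_ne_of_ne hx hy]⟩
  simpa [Nat.sub_add_cancel (orderOf_pos σ), pow_orderOf_eq_one] using hreach (orderOf σ - 1)

lemma numCycles_mul_swap_lt [Finite α] [DecidableEq α] {σ : Perm α} {x y : α}
    (hxy : ¬ σ.SameCycle x y) : numCycles (σ * swap x y) < numCycles σ := by
  have hmerge := sameCycle_mul_swap hxy
  have hstep (a : α) : (σ * swap x y).SameCycle a (σ a) := by
    rcases eq_or_ne a x with rfl | hx
    · exact hmerge.trans ⟨1, by simp⟩
    rcases eq_or_ne a y with rfl | hy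
    · exact hmerge.symm.trans ⟨1, by simp⟩
    · exact ⟨1, by simp [swap_apply_of_ne_of_ne hx hy]⟩
  let coarsen : Quotient (SameCycle.setoid σ) → Quotient (SameCycle.setoid (σ * swap x y)) :=
    Quotient.map' id fun _ _ hab => sameCycle_map_of_forall_sameCycle_apply id hstep hab
  have hsurj : Function.Surjective coarsen := by
    rintro ⟨a⟩
    exact ⟨Quotient.mk'' a, rfl⟩
  by_contra! hle
  have hinj := (hsurj.bijective_of_nat_card_le hle).injective
  have hxy' : coarsen (Quotient.mk'' x) = coarsen (Quotient.mk'' y) := Quotient.sound' hmerge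
  exact hxy (Quotient.exact (hinj hxy'))

lemma isConj_of_forall_sameCycle [Finite α] {σ ρ : Perm α} (hσ : ∀ x y, σ.SameCycle x y)
    (hρ : ∀ x y, ρ.SameCycle x y) : IsConj σ ρ := by
  have := Fintype.ofFinite α
  rcases subsingleton_or_nontrivial α with _ | hα
  · rw [Subsingleton.elim σ ρ]
  have hfull {τ : Perm α} (hτ : ∀ x y, τ.SameCycle x y) : τ.IsCycle ∧ τ.support = univ := by
    have hne (x : α) : τ x ≠ x := fun hx => by
      obtain ⟨y, hy⟩ := exists_ne x
      exact hy ((hτ x y).eq_of_left hx).symm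
    obtain ⟨x⟩ := hα.to_nonempty
    exact ⟨⟨x, hne x, fun y _ => hτ x y⟩, by ext y; simp [hne y]⟩
  exact (hfull hσ).1.isConj (hfull hρ).1 (by rw [(hfull hσ).2, (hfull hρ).2])

variable [Fintype α] [DecidableEq α]

lemma hammingDist_mul_swap_le (σ : Perm α) (x y : α) : hammingDist ⇑σ ⇑(σ * swap x y) ≤ 2 := by
  refine (card_le_card (t := {x, y}) fun a ha => ?_).trans card_le_two
  by_contra hxy
  simp only [mem_insert, mem_singleton, not_or] at hxy
  exact (mem_filter.1 ha).2 (by simp [swap_apply_of_ne_of_ne hxy.1 hxy.2])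

lemma exists_forall_sameCycle_hammingDist_le (σ : Perm α) :
    ∃ ρ : Perm α, (∀ x y, ρ.SameCycle x y) ∧ hammingDist ⇑σ ⇑ρ ≤ 2 * numCycles σ := by
  induction hk : numCycles σ using Nat.strong_induction_on generalizing σ with
  | _ k ih =>
    by_cases hσ : ∀ x y, σ.SameCycle x y
    · exact ⟨σ, hσ, by simp⟩
    push Not at hσ
    obtain ⟨x, y, hxy⟩ := hσ
    have hlt : numCycles (σ * swap x y) < k := hk ▸ numCycles_mul_swap_lt hxy
    obtain ⟨ρ, hρ, hdist⟩ := ih _ hlt _ rfl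
    have hswap := hammingDist_mul_swap_le σ x y
    have htri := hammingDist_triangle ⇑σ ⇑(σ * swap x y) ⇑ρ
    exact ⟨ρ, hρ, by omega⟩

lemma hammingDist_conj (w σ ρ : Perm α) :
    hammingDist ⇑(w * σ * w⁻¹) ⇑(w * ρ * w⁻¹) = hammingDist ⇑σ ⇑ρ :=
  card_equiv w⁻¹ fun a => by simp

lemma exists_isConj_hammingDist_le (σ s : Perm α) :
    ∃ t, IsConj s t ∧ hammingDist ⇑σ ⇑t ≤ 2 * (numCycles σ + numCycles s) := by
  obtain ⟨ρ, hρ, hσρ⟩ := exists_forall_sameCycle_hammingDist_le σ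
  obtain ⟨ρ', hρ', hsρ'⟩ := exists_forall_sameCycle_hammingDist_le s
  obtain ⟨u, rfl⟩ := isConj_iff.1 (isConj_of_forall_sameCycle hρ' hρ)
  refine ⟨u * s * u⁻¹, isConj_iff.2 ⟨u, rfl⟩, ?_⟩
  have hconj := hammingDist_conj u ρ' s
  rw [hammingDist_comm ⇑ρ'] at hconj
  have htri := hammingDist_triangle ⇑σ ⇑(u * ρ' * u⁻¹) ⇑(u * s * u⁻¹)
  omega

lemma numCycles_le_card_parts_partition (σ : Perm α) :
    numCycles σ ≤ σ.partition.parts.card := by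
  let cycleOrFixedPoint (q : Quotient (SameCycle.setoid σ)) :
      σ.cycleFactorsFinset ⊕ (σ.supportᶜ : Finset α) :=
    if h : q.out ∈ σ.support then .inl ⟨σ.cycleOf q.out, cycleOf_mem_cycleFactorsFinset_iff.2 h⟩
    else .inr ⟨q.out, mem_compl.2 h⟩
  have hinj : Function.Injective cycleOrFixedPoint := by
    intro q r hqr
    rw [← Quotient.out_eq q, ← Quotient.out_eq r]
    refine Quotient.sound (show σ.SameCycle _ _ from ?_)
    simp only [cycleOrFixedPoint] at hqr
    split_ifs at hqr with hq hr hr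
    · exact (sameCycle_iff_cycleOf_eq_of_mem_support hq hr).2 (by simpa using hqr)
    · simp only [Sum.inr.injEq, Subtype.mk.injEq] at hqr
      rw [hqr]
  refine (Nat.card_le_card_of_injective _ hinj).trans_eq ?_
  rw [Nat.card_eq_fintype_card, Fintype.card_sum, Fintype.card_coe, Fintype.card_coe, card_compl]
  simp [parts_partition, cycleType_def]

end NumCycles

/-! ### Moments of the number of cycles -/

section CycleMoments

open Equiv Equiv.Perm

lemma decomposeFin_symm_eq_mul_swap {n : ℕ} (p : Fin (n + 1)) (e : Perm (Fin n)) :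
    decomposeFin.symm (p, e) =
      decomposeFin.symm (0, e) * swap 0 ((decomposeFin.symm (0, e)).symm p) := by
  rw [mul_swap_eq_swap_mul, apply_symm_apply, decomposeFin_symm_apply_zero]
  ext x
  refine Fin.cases ?_ (fun i => ?_) x <;> simp

lemma numCycles_decomposeFin_symm_zero_le {n : ℕ} (e : Perm (Fin n)) :
    numCycles (decomposeFin.symm (0, e)) ≤ numCycles e + 1 := by
  have hsucc (i j : Fin n) (hij : e.SameCycle i j) :
      (decomposeFin.symm (0, e)).SameCycle i.succ j.succ :=
    sameCycle_map_of_forall_sameCycle_apply Fin.succ (fun i => ⟨1, by simp⟩) hij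
  let cycleMap (q : Option (Quotient (SameCycle.setoid e))) :
      Quotient (SameCycle.setoid (decomposeFin.symm (0, e))) :=
    q.elim (Quotient.mk'' 0) (Quotient.map' Fin.succ hsucc)
  have hsurj : Function.Surjective cycleMap := by
    rintro ⟨x⟩
    refine Fin.cases ⟨none, rfl⟩ (fun i => ?_) x
    exact ⟨some (Quotient.mk'' i), rfl⟩
  exact (Nat.card_le_card_of_surjective _ hsurj).trans_eq Finite.card_option

lemma numCycles_decomposeFin_symm_le {n : ℕ} (p : Fin (n + 1)) (e : Perm (Fin n)) :
    numCycles (decomposeFin.symm (p, e)) ≤ numCycles e + if p = 0 then 1 else 0 := by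
  split_ifs with hp
  · rw [hp]
    exact numCycles_decomposeFin_symm_zero_le e
  · have hfix : decomposeFin.symm (0, e) 0 = 0 := decomposeFin_symm_apply_zero 0 e
    have hsplit : ¬ (decomposeFin.symm (0, e)).SameCycle 0 ((decomposeFin.symm (0, e)).symm p) :=
      fun h => hp (by rw [eq_comm, (symm_apply_eq _).1 (h.eq_of_left hfix).symm, hfix])
    rw [decomposeFin_symm_eq_mul_swap]
    have hmerge := numCycles_mul_swap_lt hsplit
    have hzero := numCycles_decomposeFin_symm_zero_le e
    omega

lemma expect_two_pow_numCycles_le (n : ℕ) :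
    𝔼 σ : Perm (Fin n), (2 : ℝ) ^ numCycles σ ≤ n + 1 := by
  induction n with
  | zero =>
    have hzero (σ : Perm (Fin 0)) : numCycles σ = 0 := Nat.card_of_isEmpty
    simp [hzero]
  | succ n ih =>
    have hweight : 𝔼 p : Fin (n + 1), (2 : ℝ) ^ (if p = 0 then 1 else 0) = (n + 2) / (n + 1) := by
      rw [Fintype.expect_eq_sum_div_card, Fin.sum_univ_succ]
      simp [Fin.succ_ne_zero, add_comm]
    calc 𝔼 σ : Perm (Fin (n + 1)), (2 : ℝ) ^ numCycles σ
        = 𝔼 p : Fin (n + 1), 𝔼 e : Perm (Fin n),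
            (2 : ℝ) ^ numCycles (decomposeFin.symm (p, e)) := by
          rw [← expect_product', univ_product_univ]
          exact Fintype.expect_equiv decomposeFin _ _ fun σ => by simp
      _ ≤ 𝔼 p : Fin (n + 1), 𝔼 e : Perm (Fin n),
            (2 : ℝ) ^ (if p = 0 then 1 else 0) * 2 ^ numCycles e := by
          gcongr with p _ e _
          rw [← pow_add, add_comm]
          gcongr
          · exact one_le_two
          · exact numCycles_decomposeFin_symm_le p e
      _ = (n + 2) / (n + 1) * 𝔼 e : Perm (Fin n), (2 : ℝ) ^ numCycles e := by
          rw [← hweight, Fintype.expect_mul_expect]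
      _ ≤ (n + 2) / (n + 1) * (n + 1) := by gcongr
      _ = ((n + 1 : ℕ) : ℝ) + 1 := by
          push_cast
          field_simp
          ring

lemma expect_numCycles_pow_le (n p : ℕ) :
    𝔼 σ : Perm (Fin n), (numCycles σ : ℝ) ^ p ≤ p.factorial / Real.log 2 ^ p * (n + 1) := by
  calc 𝔼 σ : Perm (Fin n), (numCycles σ : ℝ) ^ p
      ≤ 𝔼 σ : Perm (Fin n), p.factorial / Real.log 2 ^ p * 2 ^ numCycles σ := by
        gcongr with σ _
        have hexp := Real.pow_div_factorial_le_exp (numCycles σ * Real.log 2) (by positivity) p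
        rw [mul_comm _ (Real.log 2), Real.exp_mul, Real.exp_log two_pos, Real.rpow_natCast,
          mul_pow] at hexp
        field_simp at hexp ⊢
        linarith
    _ ≤ _ := by
        rw [← mul_expect]
        gcongr
        exact expect_two_pow_numCycles_le n

end CycleMoments

/-! ### Averages over a conjugacy class -/

lemma En_eq_expect {n : ℕ} (g : Equiv.Perm (Fin n) → ℝ) : En g = 𝔼 σ, g σ :=
  (Fintype.expect_eq_sum_div_card g).symm

lemma EnCond_partition_eq_expect_isConj {n : ℕ} (s : Equiv.Perm (Fin n))
    (g : Equiv.Perm (Fin n) → ℝ) : EnCond s.partition g = 𝔼 σ with IsConj s σ, g σ := by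
  have hclass : ({σ | σ.partition = s.partition} : Finset (Equiv.Perm (Fin n))) =
      ({σ | IsConj s σ} : Finset _) :=
    filter_congr fun σ _ => eq_comm.trans Equiv.Perm.partition_eq_of_isConj.symm
  rw [EnCond, hclass, expect_eq_sum_div_card]

section Conjugation

variable {G : Type*} [Group G] [Fintype G]

section Module

variable {M : Type*} [AddCommMonoid M] [Module ℚ≥0 M]

lemma expect_expect_conj {T : Finset G} (hT : ∀ w t, w * t * w⁻¹ ∈ T ↔ t ∈ T) (g : G → M) :
    𝔼 t ∈ T, 𝔼 w, g (w * t * w⁻¹) = 𝔼 t ∈ T, g t := by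
  have hconj (w : G) : 𝔼 t ∈ T, g (w * t * w⁻¹) = 𝔼 t ∈ T, g t :=
    expect_equiv (MulAut.conj w).toEquiv (fun t => by simp [hT]) fun t _ => by simp
  simp_rw [expect_comm T, hconj, Fintype.expect_const]

lemma expect_conj_congr {s t : G} (hst : IsConj s t) (g : G → M) :
    𝔼 w, g (w * s * w⁻¹) = 𝔼 w, g (w * t * w⁻¹) := by
  obtain ⟨u, rfl⟩ := isConj_iff.1 hst
  exact (Fintype.expect_equiv (Equiv.mulRight u) _ _ fun w => by simp [mul_assoc]).symm

lemma expect_isConj (s : G) [DecidablePred (IsConj s)] (g : G → M) :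
    𝔼 t with IsConj s t, g t = 𝔼 w, g (w * s * w⁻¹) := by
  have hinvariant (w t : G) : w * t * w⁻¹ ∈ ({t | IsConj s t} : Finset G) ↔
      t ∈ ({t | IsConj s t} : Finset G) := by
    have htw : IsConj t (w * t * w⁻¹) := isConj_iff.2 ⟨w, rfl⟩
    simpa only [mem_filter_univ] using ⟨fun h => h.trans htw.symm, fun h => h.trans htw⟩
  rw [← expect_expect_conj hinvariant,
    expect_congr rfl fun t ht => (expect_conj_congr (mem_filter.1 ht).2 g).symm]
  exact expect_const ⟨s, (mem_filter_univ s).2 (IsConj.refl s)⟩ _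

end Module

/-- A map `t` into the conjugacy class of `s` couples a uniform element `σ` of the group with a
uniform element of that class: conjugate the pair `(σ, t σ)` by an independent uniform element. -/
lemma abs_expect_isConj_sub_expect_le {s : G} [DecidablePred (IsConj s)] {t : G → G}
    (hst : ∀ σ, IsConj s (t σ)) (g : G → ℝ) :
    |𝔼 ρ with IsConj s ρ, g ρ - 𝔼 σ, g σ| ≤
      𝔼 σ, 𝔼 w, |g (w * σ * w⁻¹) - g (w * t σ * w⁻¹)| := by
  have hclass : 𝔼 ρ with IsConj s ρ, g ρ = 𝔼 σ, 𝔼 w, g (w * t σ * w⁻¹) := by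
    simp_rw [expect_isConj, ← expect_conj_congr (hst _), Fintype.expect_const]
  rw [abs_sub_comm, hclass, ← expect_expect_conj (T := univ) (by simp) g, ← expect_sub_distrib]
  refine (abs_expect_le _ _).trans ?_
  gcongr with σ _
  rw [← expect_sub_distrib]
  exact abs_expect_le _ _

end Conjugation

lemma exists_partition_eq {α : Type*} [Fintype α] [DecidableEq α]
    (lam : (Fintype.card α).Partition) : ∃ s : Equiv.Perm α, s.partition = lam := by
  have hsplit : lam.parts =
      lam.parts.filter (2 ≤ ·) + Multiset.replicate (lam.parts.count 1) 1 := by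
    conv_lhs => rw [← Multiset.filter_add_not (2 ≤ ·) lam.parts]
    rw [← Multiset.filter_eq']
    congr 1
    refine Multiset.filter_congr fun a ha => ?_
    have hpos := lam.parts_pos ha
    omega
  have hsum : (lam.parts.filter (2 ≤ ·)).sum + lam.parts.count 1 = Fintype.card α := by
    simpa only [Multiset.sum_add, Multiset.sum_replicate, smul_eq_mul, mul_one] using
      (congrArg Multiset.sum hsplit.symm).trans lam.parts_sum
  obtain ⟨s, hs⟩ := (Equiv.Perm.exists_with_cycleType_iff (α := α)).2
    ⟨(Nat.le_add_right _ _).trans_eq hsum, fun a ha => (Multiset.mem_filter.1 ha).2⟩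
  refine ⟨s, Nat.Partition.ext ?_⟩
  rw [Equiv.Perm.parts_partition, ← Equiv.Perm.sum_cycleType, hs,
    Nat.sub_eq_of_eq_add' hsum.symm, ← hsplit]

/-! ### Kendall's tau as a sum of independent variables -/

section KendallTau

open Equiv

variable {n : ℕ}

/-- The permutation of `Fin (n + 1)` whose first value is `p` and whose remaining values are in the
same relative order as those of `e`. -/
def permCons (p : Fin (n + 1)) (e : Perm (Fin n)) : Perm (Fin (n + 1)) :=
  p.cycleRange.symm * Perm.decomposeFin.symm (0, e)

@[simp]
lemma permCons_apply_zero (p : Fin (n + 1)) (e : Perm (Fin n)) : permCons p e 0 = p := by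
  simp [permCons]

@[simp]
lemma permCons_apply_succ (p : Fin (n + 1)) (e : Perm (Fin n)) (i : Fin n) :
    permCons p e i.succ = p.succAbove (e i) := by
  simp [permCons]

lemma bijective_permCons :
    Function.Bijective fun q : Fin (n + 1) × Perm (Fin n) => permCons q.1 q.2 := by
  refine (Fintype.bijective_iff_injective_and_card _).2
    ⟨?_, by simp [Fintype.card_perm, Nat.factorial_succ]⟩
  rintro ⟨p, e⟩ ⟨q, e'⟩ heq
  obtain rfl : p = q := by simpa using Perm.congr_fun heq 0
  exact Prod.ext rfl (Perm.ext fun i => by simpa using Perm.congr_fun heq i.succ)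

lemma kendallTau_permCons (p : Fin (n + 1)) (e : Perm (Fin n)) :
    kendallTau (permCons p e) = p + kendallTau e := by
  have hfirst : ∑ j, (if p.succAbove (e j) < p then 1 else 0) = (p : ℕ) := by
    rw [Equiv.sum_comp e fun j => if p.succAbove j < p then 1 else 0, ← card_filter]
    simp_rw [Fin.succAbove_lt_iff_castSucc_lt, Fin.lt_def, Fin.val_castSucc,
      Fin.card_filter_val_lt]
    exact min_eq_right (Nat.le_of_lt_succ p.2)
  simp only [kendallTau, card_filter, Fintype.sum_prod_type, Fin.sum_univ_succ,
    permCons_apply_zero, permCons_apply_succ, Fin.succAbove_lt_succAbove_iff, Fin.succ_lt_succ_iff,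
    Fin.succ_pos, true_and, false_and, if_false, zero_add, Fin.not_lt_zero, hfirst]

/-- Kendall's tau minus its mean `n (n - 1) / 4`. -/
noncomputable def centeredKendallTau (σ : Perm (Fin n)) : ℝ :=
  kendallTau σ - n * (n - 1) / 4

lemma centeredKendallTau_permCons (p : Fin (n + 1)) (e : Perm (Fin n)) :
    centeredKendallTau (permCons p e) = (p - n / 2) + centeredKendallTau e := by
  rw [centeredKendallTau, centeredKendallTau, kendallTau_permCons]
  push_cast
  ring

lemma expect_centeredKendallTau_succ (F : ℝ → ℝ) :
    𝔼 σ : Perm (Fin (n + 1)), F (centeredKendallTau σ) =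
      𝔼 p : Fin (n + 1), 𝔼 e : Perm (Fin n), F ((p - n / 2) + centeredKendallTau e) := by
  rw [← expect_product', univ_product_univ]
  exact (Fintype.expect_bijective _ bijective_permCons _ _ fun q => by
    rw [centeredKendallTau_permCons]).symm

lemma expect_fin_sub_half (n : ℕ) : 𝔼 p : Fin (n + 1), ((p : ℝ) - n / 2) = 0 := by
  have hsum (m : ℕ) : ∑ p ∈ range (m + 1), (p : ℝ) = m * (m + 1) / 2 := by
    induction m with
    | zero => simp
    | succ m ih =>
      rw [sum_range_succ, ih]
      push_cast
      ring
  rw [Fintype.expect_eq_sum_div_card, Fin.sum_univ_eq_sum_range (fun p => (p : ℝ) - n / 2),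
    sum_sub_distrib, hsum, sum_const, card_range, nsmul_eq_mul]
  push_cast
  ring

lemma expect_fin_sub_half_sq (n : ℕ) :
    𝔼 p : Fin (n + 1), ((p : ℝ) - n / 2) ^ 2 = (n * (n + 2) / 12 : ℝ) := by
  have hsum (m : ℕ) (c : ℝ) : ∑ p ∈ range (m + 1), ((p : ℝ) - c) ^ 2 =
      m * (m + 1) * (2 * m + 1) / 6 - c * (m * (m + 1)) + (m + 1) * c ^ 2 := by
    induction m with
    | zero => simp
    | succ m ih =>
      rw [sum_range_succ, ih]
      push_cast
      ring
  rw [Fintype.expect_eq_sum_div_card, Fin.sum_univ_eq_sum_range (fun p => ((p : ℝ) - n / 2) ^ 2),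
    hsum, Fintype.card_fin]
  push_cast
  field_simp
  ring

lemma expect_centeredKendallTau (n : ℕ) : 𝔼 σ : Perm (Fin n), centeredKendallTau σ = 0 := by
  induction n with
  | zero => simp [centeredKendallTau, kendallTau]
  | succ n ih =>
    rw [expect_centeredKendallTau_succ fun x => x]
    simp_rw [expect_add_distrib, Fintype.expect_const, ih, expect_fin_sub_half, add_zero]

lemma expect_centeredKendallTau_sq (n : ℕ) :
    𝔼 σ : Perm (Fin n), centeredKendallTau σ ^ 2 = n * (n - 1) * (2 * n + 5) / 72 := by
  induction n with
  | zero => simp [centeredKendallTau, kendallTau]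
  | succ n ih =>
    rw [expect_centeredKendallTau_succ fun x => x ^ 2]
    simp_rw [add_sq, expect_add_distrib, Fintype.expect_const, ← mul_expect,
      expect_centeredKendallTau, ih, mul_zero, Fintype.expect_const, expect_fin_sub_half_sq]
    push_cast
    ring

/-- The standard deviation of Kendall's tau under the uniform measure on `S_n`. -/
noncomputable def kendallTauStdDev (n : ℕ) : ℝ :=
  √(n * (n - 1) * (2 * n + 5) / 72)

lemma kendallTauBar_eq (σ : Perm (Fin n)) :
    kendallTauBar σ = centeredKendallTau σ / kendallTauStdDev n := by
  have hmean : En (fun σ : Perm (Fin n) => (kendallTau σ : ℝ)) = n * (n - 1) / 4 := by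
    rw [En_eq_expect, ← sub_eq_zero, ← Fintype.expect_const (ι := Perm (Fin n)) (_ / _),
      ← expect_sub_distrib]
    exact expect_centeredKendallTau n
  have hvar : VarN (fun σ : Perm (Fin n) => (kendallTau σ : ℝ)) =
      n * (n - 1) * (2 * n + 5) / 72 := by
    rw [VarN, En_eq_expect, hmean]
    exact expect_centeredKendallTau_sq n
  rw [kendallTauBar, hmean, hvar, centeredKendallTau, kendallTauStdDev]

lemma pow_three_le_kendallTauStdDev_sq (hn : 2 ≤ n) :
    (n : ℝ) ^ 3 ≤ 72 * kendallTauStdDev n ^ 2 := by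
  have hn' : (2 : ℝ) ≤ n := by exact_mod_cast hn
  have hpred : 0 ≤ (n : ℝ) - 1 := by linarith
  have hrest : 0 ≤ (n : ℝ) * ((n - 2) * (n + 5) + 5) :=
    mul_nonneg n.cast_nonneg (add_nonneg (mul_nonneg (by linarith) (by linarith)) (by norm_num))
  rw [kendallTauStdDev, Real.sq_sqrt (by positivity)]
  linarith

lemma mul_sqrt_le_kendallTauStdDev (hn : 2 ≤ n) : n * √(n : ℝ) ≤ 9 * kendallTauStdDev n := by
  refine abs_le_of_sq_le_sq' ?_ ?_ |>.2
  · rw [mul_pow, Real.sq_sqrt n.cast_nonneg, mul_pow]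
    nlinarith [pow_three_le_kendallTauStdDev_sq hn]
  · exact mul_nonneg (by norm_num) (Real.sqrt_nonneg _)

lemma kendallTauStdDev_pos (hn : 2 ≤ n) : 0 < kendallTauStdDev n := by
  have hn' : (0 : ℝ) < n := by exact_mod_cast (by omega : 0 < n)
  have hpos : 0 < n * √(n : ℝ) := mul_pos hn' (Real.sqrt_pos.2 hn')
  linarith [mul_sqrt_le_kendallTauStdDev hn]

lemma kendallTau_le_add_hammingDist (σ ρ : Perm (Fin n)) :
    kendallTau σ ≤ kendallTau ρ + 2 * n * hammingDist ⇑σ ⇑ρ := by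
  let moved : Finset (Fin n) := {i | σ i ≠ ρ i}
  let inversions (π : Perm (Fin n)) : Finset (Fin n × Fin n) := {p | p.1 < p.2 ∧ π p.2 < π p.1}
  have hsub : inversions σ ⊆ inversions ρ ∪ (moved ×ˢ univ ∪ univ ×ˢ moved) := by
    rintro ⟨i, j⟩ hij
    simp only [inversions, moved, mem_filter_univ, mem_union, mem_product, mem_univ, and_true,
      true_and] at hij ⊢
    by_cases hi : σ i = ρ i
    · by_cases hj : σ j = ρ j
      · exact .inl (hi ▸ hj ▸ hij)
      · exact .inr (.inr hj)
    · exact .inr (.inl hi)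
  calc kendallTau σ
      ≤ kendallTau ρ + (#(moved ×ˢ univ) + #(univ ×ˢ moved)) :=
        (card_le_card hsub).trans <| (card_union_le _ _).trans <| by
          gcongr
          exacts [le_rfl, card_union_le _ _]
    _ = kendallTau ρ + 2 * n * hammingDist ⇑σ ⇑ρ := by
        simp only [card_product, card_univ, Fintype.card_fin, hammingDist, moved]
        ring

lemma abs_kendallTauBar_sub_le (hn : 2 ≤ n) (σ ρ : Perm (Fin n)) :
    |kendallTauBar σ - kendallTauBar ρ| ≤ 18 * (hammingDist ⇑σ ⇑ρ / √n) := by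
  have : (0 : ℝ) < n := by exact_mod_cast (by omega : 0 < n)
  have hsd := kendallTauStdDev_pos hn
  have htau : |(kendallTau σ : ℝ) - kendallTau ρ| ≤ 2 * n * hammingDist ⇑σ ⇑ρ := by
    have hσρ := kendallTau_le_add_hammingDist σ ρ
    have hρσ := kendallTau_le_add_hammingDist ρ σ
    rw [hammingDist_comm] at hρσ
    rw [abs_sub_le_iff, sub_le_iff_le_add', sub_le_iff_le_add']
    exact ⟨mod_cast hσρ, mod_cast hρσ⟩
  calc |kendallTauBar σ - kendallTauBar ρ|
      = |(kendallTau σ : ℝ) - kendallTau ρ| / kendallTauStdDev n := by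
        rw [kendallTauBar_eq, kendallTauBar_eq, ← sub_div, abs_div, abs_of_pos hsd,
          centeredKendallTau, centeredKendallTau, sub_sub_sub_cancel_right]
    _ ≤ 2 * n * hammingDist ⇑σ ⇑ρ / (n * √n / 9) := by
        gcongr
        linarith [mul_sqrt_le_kendallTauStdDev hn]
    _ = 18 * (hammingDist ⇑σ ⇑ρ / √n) := by
        field_simp
        ring

lemma expect_exp_mul_le_of_comp_eq_neg {ι : Type*} [Fintype ι] [Nonempty ι] {x : ι → ℝ} {a : ℝ}
    (r : Perm ι) (hr : ∀ i, x (r i) = -x i) (ha : ∀ i, |x i| ≤ a) (s : ℝ) :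
    𝔼 i, Real.exp (s * x i) ≤ Real.exp (s ^ 2 * a ^ 2 / 2) := by
  have hneg : 𝔼 i, Real.exp (s * x i) = 𝔼 i, Real.exp (-(s * x i)) :=
    (Fintype.expect_equiv r _ _ fun i => by rw [hr, mul_neg]).symm
  calc 𝔼 i, Real.exp (s * x i)
      = 𝔼 i, Real.cosh (s * x i) := by
        simp_rw [Real.cosh_eq, ← expect_div, expect_add_distrib, ← hneg, add_self_div_two]
    _ ≤ 𝔼 _i : ι, Real.exp (s ^ 2 * a ^ 2 / 2) := by
        gcongr with i _
        refine (Real.cosh_le_exp_half_sq _).trans (Real.exp_le_exp.2 ?_)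
        rw [mul_pow]
        gcongr s ^ 2 * ?_ / 2
        exact sq_le_sq' (neg_le_of_abs_le (ha i)) (le_of_abs_le (ha i))
    _ = Real.exp (s ^ 2 * a ^ 2 / 2) := Fintype.expect_const _

lemma expect_exp_mul_fin_sub_half_le (n : ℕ) (s : ℝ) :
    𝔼 p : Fin (n + 1), Real.exp (s * (p - n / 2)) ≤ Real.exp (s ^ 2 * (n / 2) ^ 2 / 2) := by
  refine expect_exp_mul_le_of_comp_eq_neg Fin.revPerm (fun p => ?_) (fun p => ?_) s
  · rw [Fin.revPerm_apply, Fin.val_rev, Nat.add_sub_add_right, Nat.cast_sub (by omega)]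
    ring
  · have hp : (p : ℝ) ≤ n := by exact_mod_cast Nat.le_of_lt_succ p.2
    exact abs_sub_le_iff.2 ⟨by linarith, by linarith [(p : ℕ).cast_nonneg (α := ℝ)]⟩

lemma expect_exp_mul_centeredKendallTau_le (n : ℕ) (s : ℝ) :
    𝔼 σ : Perm (Fin n), Real.exp (s * centeredKendallTau σ) ≤ Real.exp (s ^ 2 * (n ^ 3 / 24)) := by
  induction n with
  | zero => simp [centeredKendallTau, kendallTau]
  | succ n ih =>
    calc 𝔼 σ : Perm (Fin (n + 1)), Real.exp (s * centeredKendallTau σ)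
        = (𝔼 p : Fin (n + 1), Real.exp (s * (p - n / 2))) *
            𝔼 e : Perm (Fin n), Real.exp (s * centeredKendallTau e) := by
          rw [expect_centeredKendallTau_succ fun x => Real.exp (s * x)]
          simp_rw [mul_add, Real.exp_add, Fintype.expect_mul_expect]
      _ ≤ Real.exp (s ^ 2 * (n / 2) ^ 2 / 2) * Real.exp (s ^ 2 * (n ^ 3 / 24)) := by
          gcongr
          exact expect_exp_mul_fin_sub_half_le n s
      _ ≤ Real.exp (s ^ 2 * ((n + 1 : ℕ) ^ 3 / 24)) := by
          rw [← Real.exp_add, Real.exp_le_exp, mul_div_assoc, ← mul_add]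
          gcongr
          push_cast
          linarith [n.cast_nonneg (α := ℝ)]

lemma expect_exp_mul_kendallTauBar_le (hn : 2 ≤ n) {s : ℝ} (hs : s ^ 2 ≤ 1) :
    𝔼 σ : Perm (Fin n), Real.exp (s * kendallTauBar σ) ≤ Real.exp 3 := by
  have hsd := kendallTauStdDev_pos hn
  simp_rw [kendallTauBar_eq, mul_div_left_comm s, mul_comm (centeredKendallTau _)]
  refine (expect_exp_mul_centeredKendallTau_le n _).trans (Real.exp_le_exp.2 ?_)
  rw [div_pow, div_mul_eq_mul_div, div_le_iff₀ (by positivity)]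
  nlinarith [pow_three_le_kendallTauStdDev_sq hn, pow_nonneg (n.cast_nonneg (α := ℝ)) 3]

lemma expect_abs_kendallTauBar_pow_le (hn : 2 ≤ n) (p : ℕ) :
    𝔼 σ : Perm (Fin n), |kendallTauBar σ| ^ p ≤ p.factorial * (2 * Real.exp 3) := by
  calc 𝔼 σ : Perm (Fin n), |kendallTauBar σ| ^ p
      ≤ 𝔼 σ : Perm (Fin n), p.factorial *
          (Real.exp (1 * kendallTauBar σ) + Real.exp (-1 * kendallTauBar σ)) := by
        gcongr with σ _
        rw [one_mul, neg_one_mul, ← div_le_iff₀' (by positivity)]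
        exact (Real.pow_div_factorial_le_exp _ (abs_nonneg _) p).trans (Real.exp_abs_le _)
    _ ≤ p.factorial * (2 * Real.exp 3) := by
        rw [← mul_expect, expect_add_distrib, two_mul]
        gcongr <;> exact expect_exp_mul_kendallTauBar_le hn (by norm_num)

end KendallTau

/-! ### Continuous functions of polynomial growth -/

section Growth

open Asymptotics Bornology

variable {E F : Type*} [SeminormedAddCommGroup E] [SeminormedAddCommGroup F] {f : E → F} {p : ℕ}

lemma norm_sub_le_of_norm_le_pow {a b : E} {u v : F} {η L : ℝ} (hη : 0 ≤ η)
    (hu : ‖u‖ ≤ η / (1 + 2 ^ (p - 1)) * ‖a‖ ^ p + L)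
    (hv : ‖v‖ ≤ η / (1 + 2 ^ (p - 1)) * ‖b‖ ^ p + L) :
    ‖u - v‖ ≤ η * (‖a‖ ^ p + ‖a - b‖ ^ p) + 2 * L := by
  have hb : ‖b‖ ^ p ≤ 2 ^ (p - 1) * (‖a‖ ^ p + ‖a - b‖ ^ p) :=
    (pow_le_pow_left₀ (norm_nonneg b) (norm_le_norm_add_norm_sub a b) p).trans
      (add_pow_le (norm_nonneg a) (norm_nonneg _) p)
  have ha : ‖a‖ ^ p ≤ ‖a‖ ^ p + ‖a - b‖ ^ p := le_add_of_nonneg_right (by positivity)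
  calc ‖u - v‖
      ≤ ‖u‖ + ‖v‖ := norm_sub_le u v
    _ ≤ η / (1 + 2 ^ (p - 1)) * (‖a‖ ^ p + ‖b‖ ^ p) + 2 * L := by linarith
    _ ≤ η / (1 + 2 ^ (p - 1)) * ((1 + 2 ^ (p - 1)) * (‖a‖ ^ p + ‖a - b‖ ^ p)) + 2 * L := by
        gcongr
        linarith
    _ = η * (‖a‖ ^ p + ‖a - b‖ ^ p) + 2 * L := by field_simp

lemma exists_forall_le_norm_of_isLittleO_pow (hfp : f =o[cobounded E] fun x => ‖x‖ ^ p) {η : ℝ}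
    (hη : 0 < η) : ∃ R, ∀ x, R ≤ ‖x‖ → ‖f x‖ ≤ η * ‖x‖ ^ p := by
  simpa using hasBasis_cobounded_norm.eventually_iff.1 (hfp.def hη)

lemma exists_forall_norm_le_of_isLittleO_pow [ProperSpace E] (hf : Continuous f)
    (hfp : f =o[cobounded E] fun x => ‖x‖ ^ p) {η : ℝ} (hη : 0 < η) :
    ∃ L ≥ 0, ∀ x, ‖f x‖ ≤ η * ‖x‖ ^ p + L := by
  obtain ⟨R, hR⟩ := exists_forall_le_norm_of_isLittleO_pow hfp hη
  obtain ⟨L, hL⟩ := (isCompact_closedBall 0 R).exists_bound_of_continuousOn hf.continuousOn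
  refine ⟨max L 0, le_max_right L 0, fun x => ?_⟩
  rcases le_total R ‖x‖ with hx | hx
  · exact (hR x hx).trans (le_add_of_nonneg_right (le_max_right L 0))
  · exact ((hL x (by simpa using hx)).trans (le_max_left L 0)).trans
      (le_add_of_nonneg_left (by positivity))

lemma exists_forall_norm_sub_lt_of_isLittleO_pow [ProperSpace E] (hf : Continuous f)
    (hfp : f =o[cobounded E] fun x => ‖x‖ ^ p) {η : ℝ} (hη : 0 < η) :
    ∃ δ > 0, ∀ a b, ‖a - b‖ < δ → ‖f a - f b‖ ≤ η * (1 + ‖a‖ ^ p) := by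
  obtain ⟨R, hR⟩ := exists_forall_le_norm_of_isLittleO_pow hfp
    (η := η / (1 + 2 ^ (p - 1))) (by positivity)
  have hunif : UniformContinuousOn f (Metric.closedBall 0 (R + 1)) :=
    (isCompact_closedBall 0 (R + 1)).uniformContinuousOn_of_continuous hf.continuousOn
  obtain ⟨δ, hδ, hball⟩ := Metric.uniformContinuousOn_iff_le.1 hunif η hη
  simp only [mem_closedBall_zero_iff, dist_eq_norm] at hball
  refine ⟨min δ 1, lt_min hδ one_pos, fun a b hab => ?_⟩
  obtain ⟨habδ, hab1⟩ := lt_min_iff.1 hab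
  by_cases hinside : ‖a‖ ≤ R + 1 ∧ ‖b‖ ≤ R + 1
  · refine (hball a hinside.1 b hinside.2 habδ.le).trans (le_mul_of_one_le_right hη.le ?_)
    exact le_add_of_nonneg_right (by positivity)
  · have ha : R ≤ ‖a‖ := by
      by_contra! ha
      exact hinside ⟨by linarith, by linarith [norm_le_norm_add_norm_sub a b]⟩
    have hb : R ≤ ‖b‖ := by
      by_contra! hb
      exact hinside ⟨by linarith [norm_le_norm_add_norm_sub' a b], by linarith⟩
    have hfar := norm_sub_le_of_norm_le_pow (L := 0) hη.le
      ((hR a ha).trans_eq (add_zero _).symm) ((hR b hb).trans_eq (add_zero _).symm)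
    refine hfar.trans ?_
    rw [mul_zero, add_zero, add_comm]
    gcongr
    exact pow_le_one₀ (norm_nonneg _) hab1.le

lemma exists_forall_norm_sub_le_of_isLittleO_pow [ProperSpace E] (hf : Continuous f)
    (hfp : f =o[cobounded E] fun x => ‖x‖ ^ p) {η : ℝ} (hη : 0 < η) :
    ∃ K ≥ 0, ∀ a b, ‖f a - f b‖ ≤ η * (1 + ‖a‖ ^ p) + K * ‖a - b‖ ^ p := by
  obtain ⟨δ, hδ, hnear⟩ := exists_forall_norm_sub_lt_of_isLittleO_pow hf hfp hη
  obtain ⟨L, hL, hgrowth⟩ := exists_forall_norm_le_of_isLittleO_pow hf hfp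
    (η := η / (1 + 2 ^ (p - 1))) (by positivity)
  refine ⟨η + 2 * L / δ ^ p, by positivity, fun a b => ?_⟩
  rcases lt_or_ge ‖a - b‖ δ with hab | hab
  · exact (hnear a b hab).trans (le_add_of_nonneg_right (by positivity))
  · have hL' : 2 * L ≤ 2 * L / δ ^ p * ‖a - b‖ ^ p := by
      rw [div_mul_eq_mul_div, le_div_iff₀ (by positivity)]
      gcongr
    linarith [norm_sub_le_of_norm_le_pow hη.le (hgrowth a) (hgrowth b)]

lemma isLittleO_pow_of_forall_norm_le {C : ℝ} {m : ℕ} (hf : ∀ x, ‖f x‖ ≤ C * (1 + ‖x‖ ^ m))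
    (hmp : m < p) : f =o[cobounded E] fun x => ‖x‖ ^ p := by
  have hbigO : f =O[cobounded E] fun x => ‖x‖ ^ 0 + ‖x‖ ^ m :=
    .of_bound C (.of_forall fun x => (hf x).trans_eq (by
      rw [Real.norm_of_nonneg (by positivity), pow_zero]))
  have hpow {k : ℕ} (hk : k < p) : (fun x : E => ‖x‖ ^ k) =o[cobounded E] fun x => ‖x‖ ^ p :=
    (isLittleO_pow_pow_atTop_of_lt hk).comp_tendsto tendsto_norm_cobounded_atTop
  exact hbigO.trans_isLittleO ((hpow (by omega)).add (hpow hmp))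

end Growth

/-! ### The coupling bound and its limit -/

section Limit

open Asymptotics

lemma exists_isConj_abs_kendallTauBar_conj_sub_le {n : ℕ} (hn : 2 ≤ n) (s σ : Equiv.Perm (Fin n)) :
    ∃ t, IsConj s t ∧ ∀ w, |kendallTauBar (w * σ * w⁻¹) - kendallTauBar (w * t * w⁻¹)| ≤
      36 * ((numCycles σ + s.partition.parts.card) / √n) := by
  obtain ⟨t, hst, hdist⟩ := exists_isConj_hammingDist_le σ s
  have hparts := numCycles_le_card_parts_partition s
  have hdist' : (hammingDist ⇑σ ⇑t : ℝ) ≤ 2 * (numCycles σ + s.partition.parts.card) := by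
    exact_mod_cast (by omega : hammingDist ⇑σ ⇑t ≤ 2 * (numCycles σ + s.partition.parts.card))
  refine ⟨t, hst, fun w => ?_⟩
  calc |kendallTauBar (w * σ * w⁻¹) - kendallTauBar (w * t * w⁻¹)|
      ≤ 18 * (hammingDist ⇑σ ⇑t / √n) := by
        simpa only [hammingDist_conj] using abs_kendallTauBar_sub_le hn (w * σ * w⁻¹) (w * t * w⁻¹)
    _ ≤ 18 * (2 * (numCycles σ + s.partition.parts.card) / √n) := by gcongr
    _ = 36 * ((numCycles σ + s.partition.parts.card) / √n) := by ring

lemma abs_EnCond_sub_En_le {n : ℕ} (hn : 2 ≤ n) (lam : (Fintype.card (Fin n)).Partition)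
    {f : ℝ → ℝ} {p : ℕ} {η K : ℝ} (hη : 0 ≤ η) (hK : 0 ≤ K)
    (hf : ∀ a b, |f a - f b| ≤ η * (1 + |a| ^ p) + K * |a - b| ^ p) :
    |EnCond lam (fun σ => f (kendallTauBar σ)) - En (n := n) fun σ => f (kendallTauBar σ)| ≤
      η * (1 + p.factorial * (2 * Real.exp 3)) +
        K * 36 ^ p * 𝔼 σ : Equiv.Perm (Fin n), ((numCycles σ + lam.parts.card) / √(n : ℝ)) ^ p := by
  obtain ⟨s, rfl⟩ := exists_partition_eq lam
  choose t hconj hmove using exists_isConj_abs_kendallTauBar_conj_sub_le hn s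
  calc |EnCond s.partition (fun σ => f (kendallTauBar σ)) -
        En (n := n) fun σ => f (kendallTauBar σ)|
      ≤ 𝔼 σ, 𝔼 w, |f (kendallTauBar (w * σ * w⁻¹)) - f (kendallTauBar (w * t σ * w⁻¹))| := by
        rw [En_eq_expect, EnCond_partition_eq_expect_isConj]
        exact abs_expect_isConj_sub_expect_le hconj fun σ => f (kendallTauBar σ)
    _ ≤ 𝔼 σ, 𝔼 w, (η * (1 + |kendallTauBar (w * σ * w⁻¹)| ^ p) +
          K * (36 * ((numCycles σ + s.partition.parts.card) / √(n : ℝ))) ^ p) := by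
        gcongr with σ _ w _
        refine (hf _ _).trans ?_
        gcongr
        exact hmove σ w
    _ = η * (1 + 𝔼 σ : Equiv.Perm (Fin n), |kendallTauBar σ| ^ p) + K * 36 ^ p *
          𝔼 σ : Equiv.Perm (Fin n), ((numCycles σ + s.partition.parts.card) / √(n : ℝ)) ^ p := by
        rw [← expect_expect_conj (T := univ) (by simp) fun σ => |kendallTauBar σ| ^ p]
        simp_rw [mul_pow, expect_add_distrib, ← mul_expect, expect_add_distrib,
          Fintype.expect_const, mul_assoc]
    _ ≤ _ := by
        gcongr
        exact expect_abs_kendallTauBar_pow_le hn p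

lemma tendsto_add_one_div_sqrt_pow {p : ℕ} (hp : 3 ≤ p) :
    Tendsto (fun n : ℕ => ((n : ℝ) + 1) / √n ^ p) atTop (nhds 0) := by
  have hsqrt : Tendsto (fun n : ℕ => 2 / √(n : ℝ)) atTop (nhds 0) :=
    (Real.tendsto_sqrt_atTop.comp tendsto_natCast_atTop_atTop).const_div_atTop 2
  refine squeeze_zero' (.of_forall fun n => by positivity) ?_ hsqrt
  filter_upwards [eventually_ge_atTop 1] with n hn
  have hn' : (1 : ℝ) ≤ n := by exact_mod_cast hn
  have hsqrt_pos : 0 < √(n : ℝ) := by positivity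
  calc ((n : ℝ) + 1) / √n ^ p ≤ (2 * n) / √n ^ 3 := by
        gcongr
        · linarith
        · exact Real.one_le_sqrt.2 hn'
    _ = 2 / √n := by
        rw [div_eq_div_iff (by positivity) hsqrt_pos.ne', pow_succ, Real.sq_sqrt n.cast_nonneg]
        ring

lemma tendsto_expect_numCycles_add_div_sqrt_pow {p : ℕ} (hp : 3 ≤ p) {k : ℕ → ℕ}
    (hk : (fun n => (k n : ℝ)) =o[atTop] fun n => √(n : ℝ)) :
    Tendsto (fun n : ℕ => 𝔼 σ : Equiv.Perm (Fin n), ((numCycles σ + k n) / √(n : ℝ)) ^ p)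
      atTop (nhds 0) := by
  have hbound (n : ℕ) : 𝔼 σ : Equiv.Perm (Fin n), ((numCycles σ + k n) / √(n : ℝ)) ^ p ≤
      2 ^ (p - 1) * (p.factorial / Real.log 2 ^ p * ((n + 1) / √n ^ p) + (k n / √n) ^ p) := by
    calc 𝔼 σ : Equiv.Perm (Fin n), ((numCycles σ + k n) / √(n : ℝ)) ^ p
        ≤ 𝔼 σ : Equiv.Perm (Fin n),
            2 ^ (p - 1) * ((numCycles σ : ℝ) ^ p / √n ^ p + (k n / √n) ^ p) := by
          gcongr with σ _
          rw [add_div, ← div_pow]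
          exact add_pow_le (by positivity) (by positivity) p
      _ = 2 ^ (p - 1) * ((𝔼 σ : Equiv.Perm (Fin n), (numCycles σ : ℝ) ^ p) / √n ^ p +
            (k n / √n) ^ p) := by
          rw [← mul_expect, expect_add_distrib, Fintype.expect_const, expect_div]
      _ ≤ _ := by
          rw [← mul_div_assoc]
          gcongr
          exact expect_numCycles_pow_le n p
  have hlim := (((tendsto_add_one_div_sqrt_pow hp).const_mul (p.factorial / Real.log 2 ^ p)).add
    (hk.tendsto_div_nhds_zero.pow p)).const_mul (2 ^ (p - 1))
  rw [zero_pow (by omega), mul_zero, add_zero, mul_zero] at hlim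
  exact squeeze_zero (fun n => expect_nonneg fun σ _ => by positivity) hbound hlim

lemma isLittleO_rpow_sqrt {ε : ℝ} (hε : ε < 1 / 2) :
    (fun n : ℕ => (n : ℝ) ^ ε) =o[atTop] fun n => √(n : ℝ) := by
  have hpow := (tendsto_rpow_neg_atTop (sub_pos.2 hε)).comp (tendsto_natCast_atTop_atTop (R := ℝ))
  refine isLittleO_of_tendsto' ?_ (hpow.congr' ?_)
  all_goals filter_upwards [eventually_gt_atTop 0] with n hn
  · simp [hn.ne']
  · rw [Function.comp_apply, neg_sub, Real.rpow_sub (by exact_mod_cast hn), Real.sqrt_eq_rpow]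

lemma tendsto_zero_of_forall_abs_le_mul_add {ι : Type*} {l : Filter ι} {x : ι → ℝ} {B : ℝ}
    (hx : ∀ η > 0, ∃ u : ι → ℝ, Tendsto u l (nhds 0) ∧ ∀ᶠ i in l, |x i| ≤ η * B + u i) :
    Tendsto x l (nhds 0) := by
  rw [← isLittleO_one_iff ℝ, isLittleO_iff]
  intro c hc
  have hB : 0 < 1 + |B| := by positivity
  obtain ⟨u, hu, hxu⟩ := hx (c / 2 / (1 + |B|)) (by positivity)
  filter_upwards [hxu, hu.eventually_le_const (half_pos hc)] with i hxi hui
  have hηB : c / 2 / (1 + |B|) * B ≤ c / 2 := by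
    rw [div_mul_eq_mul_div, div_le_iff₀ hB]
    gcongr
    linarith [le_abs_self B]
  rw [Real.norm_eq_abs, norm_one, mul_one]
  linarith

theorem condExp_kendallTauBar_given_cycleType_tendsto_general
    (lam : ∀ n : ℕ, (Fintype.card (Fin n)).Partition)
    (hlam : (fun n => ((lam n).parts.card : ℝ)) =o[atTop] fun n => √(n : ℝ))
    (f : ℝ → ℝ) (hf : Continuous f)
    (hpoly : ∃ C : ℝ, ∃ m : ℕ, ∀ x : ℝ, |f x| ≤ C * (1 + |x| ^ m)) :
    Tendsto (fun n : ℕ =>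
        EnCond (lam n) (fun σ => f (kendallTauBar σ)) -
          En (n := n) (fun σ => f (kendallTauBar σ)))
      atTop (nhds 0) := by
  obtain ⟨C, m, hC⟩ := hpoly
  refine tendsto_zero_of_forall_abs_le_mul_add
    (B := 1 + (m + 3).factorial * (2 * Real.exp 3)) fun η hη => ?_
  obtain ⟨K, hK, hfK⟩ := exists_forall_norm_sub_le_of_isLittleO_pow hf
    (isLittleO_pow_of_forall_norm_le hC (by omega : m < m + 3)) hη
  have hmoment := tendsto_expect_numCycles_add_div_sqrt_pow (by omega : 3 ≤ m + 3) hlam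
  refine ⟨_, by simpa using hmoment.const_mul (K * 36 ^ (m + 3)), ?_⟩
  filter_upwards [eventually_ge_atTop 2] with n hn
  exact abs_EnCond_sub_En_le hn (lam n) hη.le hK hfK

end Limit

/-- For `0 < ε < 1/6` and partitions `λ^n ⊢ n` with at most `n^ε` parts, the
conditional expectation of `f(τ̄)` given cycle type `λ^n` converges to the
unconditional expectation, for every continuous `f` of polynomial growth. -/
theorem condExp_kendallTauBar_given_cycleType_tendsto
    (ε : ℝ) (hε0 : 0 < ε) (hε : ε < 1 / 6)
    (lam : ∀ n : ℕ, (Fintype.card (Fin n)).Partition)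
    (hlam : ∀ n : ℕ, ((lam n).parts.card : ℝ) ≤ (n : ℝ) ^ ε)
    (f : ℝ → ℝ) (hf : Continuous f)
    (hpoly : ∃ C : ℝ, ∃ m : ℕ, ∀ x : ℝ, |f x| ≤ C * (1 + |x| ^ m)) :
    Tendsto (fun n : ℕ =>
        EnCond (lam n) (fun σ => f (kendallTauBar σ)) -
          En (n := n) (fun σ => f (kendallTauBar σ)))
      atTop (nhds 0) := by
  have hparts : (fun n => ((lam n).parts.card : ℝ)) =O[atTop] fun n : ℕ => (n : ℝ) ^ ε :=
    .of_norm_le fun n => by simpa using hlam n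
  exact condExp_kendallTauBar_given_cycleType_tendsto_general lam
    (hparts.trans_isLittleO (isLittleO_rpow_sqrt (by linarith))) f hf hpoly
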